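/- The maps α, β, γ : T⁷ → T⁷ pairwise commute, each of α, β, γ has order exactly 2 in the group of bijections of T⁷, and the subgroup Γ of bijections of T⁷ generated by α, β, γ is isomorphic to (ℤ/2ℤ)³; in particular Γ has order 8. -/

import Mathlib

/-- The 7-torus `T⁷ = (ℝ/ℤ)⁷`. -/
abbrev T7 : Type := Fin 7 → AddCircle (1 : ℝ)

/-- The element `½ ∈ ℝ/ℤ`. -/
noncomputable def half : AddCircle (1 : ℝ) := ((1 / 2 : ℝ) : AddCircle (1 : ℝ))

/-- `α(x) = (x₁, x₂, x₃, −x₄, −x₅, −x₆, −x₇)` on `T⁷` (with 0-based indexing). -/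
noncomputable def tα : T7 → T7 := fun x => ![x 0, x 1, x 2, -x 3, -x 4, -x 5, -x 6]

/-- `β(x) = (x₁, −x₂, −x₃, x₄, x₅, ½−x₆, −x₇)` on `T⁷` (with 0-based indexing). -/
noncomputable def tβ : T7 → T7 := fun x => ![x 0, -x 1, -x 2, x 3, x 4, half - x 5, -x 6]

/-- `γ(x) = (−x₁, x₂, −x₃, x₄, ½−x₅, x₆, ½−x₇)` on `T⁷` (with 0-based indexing). -/
noncomputable def tγ : T7 → T7 := fun x => ![-x 0, x 1, -x 2, x 3, half - x 4, x 5, half - x 6]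

lemma tα_invol : Function.Involutive tα := by
  intro x; funext i
  fin_cases i
  · rfl
  · rfl
  · rfl
  · exact neg_neg _
  · exact neg_neg _
  · exact neg_neg _
  · exact neg_neg _

lemma tβ_invol : Function.Involutive tβ := by
  intro x; funext i
  fin_cases i
  · rfl
  · exact neg_neg _
  · exact neg_neg _
  · rfl
  · rfl
  · exact sub_sub_cancel _ _
  · exact neg_neg _

lemma tγ_invol : Function.Involutive tγ := by
  intro x; funext i
  fin_cases i
  · exact neg_neg _
  · rfl
  · exact neg_neg _
  · rfl
  · exact sub_sub_cancel _ _
  · rfl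
  · exact sub_sub_cancel _ _

/-- `α` as a bijection (element of the group of bijections) of `T⁷`. -/
noncomputable def pα : Equiv.Perm T7 := Function.Involutive.toPerm tα tα_invol

/-- `β` as a bijection (element of the group of bijections) of `T⁷`. -/
noncomputable def pβ : Equiv.Perm T7 := Function.Involutive.toPerm tβ tβ_invol

/-- `γ` as a bijection (element of the group of bijections) of `T⁷`. -/
noncomputable def pγ : Equiv.Perm T7 := Function.Involutive.toPerm tγ tγ_invol

lemma half_add_half : half + half = 0 := by
  rw [half, ← AddCircle.coe_add]
  norm_num

lemma neg_half : -half = half := neg_eq_of_add_eq_zero_left half_add_half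

lemma half_ne_zero' : half ≠ 0 := by
  intro h
  rw [half, AddCircle.coe_eq_zero_iff] at h
  obtain ⟨n, hn⟩ := h
  have h2 : (2 * n : ℝ) = 1 := by
    rw [zsmul_eq_mul] at hn
    linarith
  have h3 : 2 * n = 1 := by exact_mod_cast h2
  omega

/-- The point `1/4` of the circle. -/
noncomputable def quarter : AddCircle (1 : ℝ) := ((1 / 4 : ℝ) : AddCircle (1 : ℝ))

lemma quarter_ne : -quarter ≠ quarter := by
  intro h
  apply half_ne_zero'
  have : half = quarter + quarter := by
    rw [half, quarter, ← AddCircle.coe_add]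
    norm_num
  rw [this]
  nth_rewrite 1 [← h]
  simp

lemma pα_apply (x : T7) : pα x = ![x 0, x 1, x 2, -x 3, -x 4, -x 5, -x 6] := rfl

lemma pβ_apply (x : T7) : pβ x = ![x 0, -x 1, -x 2, x 3, x 4, half - x 5, -x 6] := rfl

lemma pγ_apply (x : T7) : pγ x = ![-x 0, x 1, -x 2, x 3, half - x 4, x 5, half - x 6] := rfl

lemma comm_aux (y : AddCircle (1 : ℝ)) : -(half - y) = half - -y := by
  rw [neg_sub, sub_neg_eq_add, sub_eq_add_neg, neg_half, add_comm]

lemma commαβ : Commute pα pβ := by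
  apply Equiv.ext
  intro x
  rw [Equiv.Perm.mul_apply, Equiv.Perm.mul_apply]
  funext i
  fin_cases i <;> simp [pα_apply, pβ_apply, pγ_apply, -neg_sub, -sub_neg_eq_add, comm_aux]

lemma commαγ : Commute pα pγ := by
  apply Equiv.ext
  intro x
  rw [Equiv.Perm.mul_apply, Equiv.Perm.mul_apply]
  funext i
  fin_cases i <;> simp [pα_apply, pβ_apply, pγ_apply, -neg_sub, -sub_neg_eq_add, comm_aux]

lemma commβγ : Commute pβ pγ := by
  apply Equiv.ext
  intro x
  rw [Equiv.Perm.mul_apply, Equiv.Perm.mul_apply]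
  funext i
  fin_cases i <;> simp [pα_apply, pβ_apply, pγ_apply, -neg_sub, -sub_neg_eq_add, comm_aux]

lemma sqα : pα * pα = 1 := Equiv.ext tα_invol
lemma sqβ : pβ * pβ = 1 := Equiv.ext tβ_invol
lemma sqγ : pγ * pγ = 1 := Equiv.ext tγ_invol

lemma pow_val_add {G : Type*} [Group G] {a : G} (ha : a * a = 1) (x y : ZMod 2) :
    a ^ (x + y).val = a ^ x.val * a ^ y.val := by
  rw [ZMod.val_add, ← pow_add]
  exact (pow_eq_pow_mod _ (by rw [pow_two, ha])).symm

/-- The homomorphism `(i, j, k) ↦ αⁱ βʲ γᵏ`. -/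
noncomputable def homΓ : Multiplicative (ZMod 2 × ZMod 2 × ZMod 2) →* Equiv.Perm T7 :=
  MonoidHom.mk' (fun x => pα ^ x.toAdd.1.val * (pβ ^ x.toAdd.2.1.val * pγ ^ x.toAdd.2.2.val)) (by
    intro x y
    simp only [toAdd_mul, Prod.fst_add, Prod.snd_add, pow_val_add sqα, pow_val_add sqβ,
      pow_val_add sqγ]
    rw [Commute.mul_mul_mul_comm (commβγ.pow_pow _ _), Commute.mul_mul_mul_comm]
    exact (commαβ.pow_pow _ _).mul_right (commαγ.pow_pow _ _))

lemma homΓ_apply (i j k : ZMod 2) : homΓ (Multiplicative.ofAdd (i, j, k)) =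
    pα ^ i.val * (pβ ^ j.val * pγ ^ k.val) := rfl

lemma val_cases (i : ZMod 2) : i = 0 ∧ i.val = 0 ∨ i = 1 ∧ i.val = 1 := by
  revert i
  decide

lemma homΓ_injective : Function.Injective homΓ := by
  rw [injective_iff_map_eq_one]
  intro x hx
  obtain ⟨i, j, k⟩ := x
  change homΓ (Multiplicative.ofAdd (i, j, k)) = 1 at hx
  change Multiplicative.ofAdd (i, j, k) = 1
  rw [homΓ_apply] at hx
  have h := fun n : Fin 7 => congrFun (Equiv.congr_fun hx (fun _ => quarter)) n
  have h0 := h 0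
  have h1 := h 1
  have h3 := h 3
  rcases val_cases i with ⟨hi, hi'⟩ | ⟨hi, hi'⟩ <;>
  rcases val_cases j with ⟨hj, hj'⟩ | ⟨hj, hj'⟩ <;>
  rcases val_cases k with ⟨hk, hk'⟩ | ⟨hk, hk'⟩ <;>
  rw [hi', hj', hk'] at h0 h1 h3 <;>
  simp only [pow_zero, pow_one, one_mul, mul_one] at h0 h1 h3 <;>
  first
  | (subst hi hj hk; rfl)
  | exact absurd h0 quarter_ne
  | exact absurd h1 quarter_ne
  | exact absurd h3 quarter_ne

lemma homΓ_range : homΓ.range = Subgroup.closure {pα, pβ, pγ} := by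
  apply le_antisymm
  · rintro _ ⟨⟨i, j, k⟩, rfl⟩
    exact mul_mem (pow_mem (Subgroup.subset_closure (by simp)) _)
      (mul_mem (pow_mem (Subgroup.subset_closure (by simp)) _)
        (pow_mem (Subgroup.subset_closure (by simp)) _))
  · rw [Subgroup.closure_le]
    rintro g (rfl | rfl | rfl)
    · exact ⟨Multiplicative.ofAdd (1, 0, 0), by rw [homΓ_apply]; simp [ZMod.val_one]⟩
    · exact ⟨Multiplicative.ofAdd (0, 1, 0), by rw [homΓ_apply]; simp [ZMod.val_one]⟩
    · exact ⟨Multiplicative.ofAdd (0, 0, 1), by rw [homΓ_apply]; simp [ZMod.val_one]⟩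

/-- The isomorphism `Γ ≃ (ℤ/2)³`. -/
noncomputable def equivΓ : (Subgroup.closure {pα, pβ, pγ} : Subgroup (Equiv.Perm T7)) ≃*
    Multiplicative (ZMod 2 × ZMod 2 × ZMod 2) :=
  ((MonoidHom.ofInjective homΓ_injective).trans (MulEquiv.subgroupCongr homΓ_range)).symm

lemma neα : pα ≠ 1 := fun h => quarter_ne (congrFun (Equiv.congr_fun h (fun _ => quarter)) 3)
lemma neβ : pβ ≠ 1 := fun h => quarter_ne (congrFun (Equiv.congr_fun h (fun _ => quarter)) 1)
lemma neγ : pγ ≠ 1 := fun h => quarter_ne (congrFun (Equiv.congr_fun h (fun _ => quarter)) 0)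

/-- `α, β, γ` pairwise commute, each has order exactly `2` in the group of bijections of `T⁷`,
and the subgroup `Γ` of bijections of `T⁷` generated by `α, β, γ` is isomorphic to `(ℤ/2ℤ)³`;
in particular `Γ` has order `8`. -/
theorem statement5 :
    Commute pα pβ ∧ Commute pα pγ ∧ Commute pβ pγ ∧
    orderOf pα = 2 ∧ orderOf pβ = 2 ∧ orderOf pγ = 2 ∧
    Nonempty ((Subgroup.closure {pα, pβ, pγ} : Subgroup (Equiv.Perm T7)) ≃*
      Multiplicative (ZMod 2 × ZMod 2 × ZMod 2)) ∧
    Nat.card (Subgroup.closure {pα, pβ, pγ} : Subgroup (Equiv.Perm T7)) = 8 := by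
  refine ⟨commαβ, commαγ, commβγ, orderOf_eq_prime (by rw [pow_two, sqα]) neα,
    orderOf_eq_prime (by rw [pow_two, sqβ]) neβ, orderOf_eq_prime (by rw [pow_two, sqγ]) neγ,
    ⟨equivΓ⟩, ?_⟩
  rw [Nat.card_congr equivΓ.toEquiv, Nat.card_congr Multiplicative.toAdd]
  simp
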